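/- For every n ∈ ℕ, the polynomial identity (with rational coefficients) Σ_{i=0}^{n} (1/(i+1))·C(n,i)·C(n+1,i) t^i = Σ_{i=0}^{⌊n/2⌋} (1/(i+1))·C(n,i)·C(n−i,i) t^i (1+t)^{n−2i} holds, where C(a,b) denotes the binomial coefficient. -/

import Mathlib

open Finset Polynomial

/-!
Expanding `(1 + t) ^ (n - 2 * i)` and regrouping trinomial coefficients, `t ^ k` occurs in
`C(n,i) C(n-i,i) tⁱ (1+t)^{n-2i}` with coefficient `C(n,k) · C(k,i) C(n-k,i)`. For the weights
`1 / C(i+a,a)` absorption turns `C(k,i)` into `C(k+a,i+a)`, and what remains of the sum over `i`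
is Vandermonde's convolution. The Narayana polynomials (type A) are the case `a = 1`; their type B
analogues `∑ C(n,i)² tⁱ` are the case `a = 0`.
-/

theorem choose_mul_choose_sub_comm (n i j : ℕ) :
    n.choose i * (n - i).choose j = n.choose j * (n - j).choose i := by
  have regroup (i j : ℕ) : n.choose i * (n - i).choose j = n.choose (i + j) * (i + j).choose i := by
    rw [Nat.choose_mul (Nat.le_add_right i j), Nat.add_sub_cancel_left]
  rw [regroup, regroup, add_comm j i, Nat.choose_symm_add]

theorem choose_mul_choose_sub_mul_choose_sub {n k i : ℕ} (hik : i ≤ k) :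
    n.choose i * (n - i).choose i * (n - 2 * i).choose (k - i) =
      k.choose i * (n - k).choose i * n.choose k := by
  have hn : n - i - (k - i) = n - k := by lia
  calc n.choose i * (n - i).choose i * (n - 2 * i).choose (k - i)
    _ = n.choose i * ((n - i).choose i * (n - i - i).choose (k - i)) := by
      rw [mul_assoc, Nat.sub_sub, two_mul]
    _ = n.choose i * ((n - i).choose (k - i) * (n - k).choose i) := by
      rw [choose_mul_choose_sub_comm, hn]
    _ = k.choose i * (n - k).choose i * n.choose k := by
      rw [← mul_assoc, ← Nat.choose_mul hik]
      ring

theorem sum_choose_mul_X_pow_mul_one_add_X_pow {R : Type*} [Semiring R] (w : ℕ → R) (n : ℕ) :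
    ∑ i ∈ range (n / 2 + 1),
        C (w i * (n.choose i * (n - i).choose i : ℕ)) * X ^ i * (1 + X) ^ (n - 2 * i) =
      ∑ k ∈ range (n + 1),
        C ((∑ i ∈ range (k + 1), w i * (k.choose i * (n - k).choose i : ℕ)) * n.choose k) *
          X ^ k := by
  ext k
  have hcoeff_rhs (c : ℕ → R) :
      (∑ k ∈ range (n + 1), C (c k * n.choose k) * X ^ k).coeff k = c k * n.choose k := by
    simp only [finsetSum_coeff, coeff_C_mul_X_pow, sum_ite_eq, mem_range]
    split_ifs with hk
    · rfl
    · rw [Nat.choose_eq_zero_of_lt (by lia), Nat.cast_zero, mul_zero]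
  have hterm {i : ℕ} (hik : i ≤ k) :
      w i * (n.choose i * (n - i).choose i : ℕ) * (n - 2 * i).choose (k - i) =
        w i * (k.choose i * (n - k).choose i : ℕ) * n.choose k := by
    rw [mul_assoc, mul_assoc, ← Nat.cast_mul, ← Nat.cast_mul,
      choose_mul_choose_sub_mul_choose_sub hik]
  rw [hcoeff_rhs, finsetSum_coeff, sum_mul]
  simp only [mul_assoc (C _), coeff_C_mul, coeff_X_pow_mul', coeff_one_add_X_pow]
  refine sum_congr_of_eq_on_inter (fun i _ hi ↦ ?_) (fun i hi hin ↦ ?_) (fun i _ hi ↦ ?_)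
  · rw [if_neg (mt mem_range_succ_iff.mpr hi), mul_zero]
  · have hchoose : (n - i).choose i = 0 := Nat.choose_eq_zero_of_lt (by grind)
    rw [← hterm (mem_range_succ_iff.mp hi), hchoose, mul_zero, Nat.cast_zero, mul_zero, zero_mul]
  · rw [if_pos (mem_range_succ_iff.mp hi), hterm (mem_range_succ_iff.mp hi)]

theorem sum_range_choose_add_mul_choose (m k a : ℕ) :
    ∑ i ∈ range (k + 1), (k + a).choose (i + a) * m.choose i = (m + (k + a)).choose k := by
  rw [Nat.add_choose_eq, Nat.sum_antidiagonal_eq_sum_range_succ_mk]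
  refine sum_congr rfl fun i hi ↦ ?_
  have hik : i ≤ k := mem_range_succ_iff.mp hi
  have hsub : k + a - (i + a) = k - i := by lia
  rw [mul_comm, ← Nat.choose_symm (Nat.add_le_add_right hik a), hsub]

section Semifield

variable {K : Type*} [Semifield K] [CharZero K]

theorem choose_div_choose_add (k i a : ℕ) :
    (k.choose i : K) / (i + a).choose a = (k + a).choose (i + a) / (k + a).choose a := by
  have hne (j : ℕ) : ((j + a).choose a : K) ≠ 0 :=
    Nat.cast_ne_zero.mpr (Nat.choose_ne_zero (Nat.le_add_left a j))
  have habsorb : (k + a).choose (i + a) * (i + a).choose a = (k + a).choose a * k.choose i := by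
    simpa using Nat.choose_mul (n := k + a) (Nat.le_add_left a i)
  rw [div_eq_div_iff (hne i) (hne k), mul_comm]
  exact_mod_cast habsorb.symm

theorem sum_choose_mul_choose_div_choose_add (m k a : ℕ) :
    ∑ i ∈ range (k + 1), (k.choose i * m.choose i : K) / (i + a).choose a =
      (m + (k + a)).choose k / (k + a).choose a := by
  rw [← sum_range_choose_add_mul_choose, Nat.cast_sum, sum_div]
  refine sum_congr rfl fun i _ ↦ ?_
  rw [mul_div_right_comm, choose_div_choose_add, Nat.cast_mul, mul_div_right_comm]

theorem narayana_gamma_general (n a : ℕ) :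
    (∑ i ∈ range (n + 1), C ((n.choose i * (n + a).choose i : K) / (i + a).choose a) * X ^ i) =
      ∑ i ∈ range (n / 2 + 1),
        C ((n.choose i * (n - i).choose i : K) / (i + a).choose a) * X ^ i *
          (1 + X) ^ (n - 2 * i) := by
  have hexp := sum_choose_mul_X_pow_mul_one_add_X_pow (fun i ↦ ((i + a).choose a : K)⁻¹) n
  simp only [inv_mul_eq_div, Nat.cast_mul] at hexp
  rw [hexp]
  refine sum_congr rfl fun k hk ↦ ?_
  have hkn : n - k + (k + a) = n + a := by grind
  rw [sum_choose_mul_choose_div_choose_add, hkn, mul_comm (n.choose k : K), mul_div_right_comm]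

end Semifield

/-- The gamma-expansion of the Narayana polynomial:
`∑_{i=0}^n (1/(i+1))·C(n,i)·C(n+1,i) tⁱ
  = ∑_{i=0}^{⌊n/2⌋} (1/(i+1))·C(n,i)·C(n-i,i) tⁱ (1+t)^{n-2i}`. -/
theorem narayana_gamma (n : ℕ) :
    (∑ i ∈ Finset.range (n + 1),
        Polynomial.C ((n.choose i * (n + 1).choose i : ℚ) / (i + 1)) * X ^ i) =
      ∑ i ∈ Finset.range (n / 2 + 1),
        Polynomial.C ((n.choose i * (n - i).choose i : ℚ) / (i + 1)) * X ^ i *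
          (1 + X) ^ (n - 2 * i) := by
  simpa only [Nat.choose_one_right, Nat.cast_add_one] using narayana_gamma_general (K := ℚ) n 1
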